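/- Let L > μ > 0, λ > 0, let F ∈ ℝ^{p×d} satisfy F·Fᵀ = I_p, and let b ∈ ℝ^d satisfy Fᵀ·F·b = 0. Define h : ℝ^d → ℝ by h(z) = (μ/2)‖z‖² + ((L−μ)/2)‖Fz‖² − ⟨b,z⟩. Then for every z ∈ ℝ^d, the Moreau envelope inf_{z' ∈ ℝ^d} ( h(z') + (1/(2λ))‖z'−z‖² ) equals (μλ̂/2)‖z‖² + ((Lλ̂ − μλ̂)/2)‖Fz‖² − Bλ̂·⟨b,z⟩ − Cλ̂, where Lλ̂ := (λ + 1/L)^{−1}, μλ̂ := (λ + 1/μ)^{−1}, Bλ̂ := (1 + λμ)^{−1}, and Cλ̂ := λ‖b‖²/(2(1+λμ)). -/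

import Mathlib

open scoped RealInnerProductSpace Matrix

/-- Completing the square around the minimizer, in abstract form. -/
lemma moreau_aux {E V : Type*} [NormedAddCommGroup E] [InnerProductSpace ℝ E]
    [NormedAddCommGroup V] [InnerProductSpace ℝ V]
    (T : E →ₗ[ℝ] V) (P : E →ₗ[ℝ] E) (L μ lam : ℝ)
    (hμ : 0 < μ) (hL : μ < L) (hlam : 0 < lam)
    (hP : ∀ x y, ⟪P x, y⟫ = ⟪T x, T y⟫) (hTP : ∀ x, T (P x) = T x)
    (b : E) (hb : T b = 0) (z m u : E)
    (hm : m = (1 + lam * μ)⁻¹ • (z + lam • b) + ((1 + lam * L)⁻¹ - (1 + lam * μ)⁻¹) • P z) :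
    μ / 2 * ‖m + u‖ ^ 2 + (L - μ) / 2 * ‖T (m + u)‖ ^ 2 - ⟪b, m + u⟫
        + 1 / (2 * lam) * ‖m + u - z‖ ^ 2 =
      (lam + 1 / μ)⁻¹ / 2 * ‖z‖ ^ 2 +
          ((lam + 1 / L)⁻¹ - (lam + 1 / μ)⁻¹) / 2 * ‖T z‖ ^ 2 -
          (1 + lam * μ)⁻¹ * ⟪b, z⟫ - lam * ‖b‖ ^ 2 / (2 * (1 + lam * μ))
        + ((μ + 1 / lam) / 2 * ‖u‖ ^ 2 + (L - μ) / 2 * ‖T u‖ ^ 2) := by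
  have hL0 : 0 < L := hμ.trans hL
  have e1 : (lam + 1 / μ)⁻¹ = μ * (1 + lam * μ)⁻¹ := by field_simp; ring
  have e2 : (lam + 1 / L)⁻¹ = L * (1 + lam * L)⁻¹ := by field_simp; ring
  have ha : (1 + lam * μ) ≠ 0 := by positivity
  have hc : (1 + lam * L) ≠ 0 := by positivity
  have hTm : T m = (1 + lam * L)⁻¹ • T z := by
    rw [hm]; simp only [map_add, map_smul, hb, hTP]; module
  have hmx : ∀ x, ⟪m, x⟫ = (1 + lam * μ)⁻¹ * (⟪z, x⟫ + lam * ⟪b, x⟫)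
      + ((1 + lam * L)⁻¹ - (1 + lam * μ)⁻¹) * ⟪T z, T x⟫ := by
    intro x
    rw [hm]; simp only [inner_add_left, real_inner_smul_left, hP]
  have hbm : ⟪b, m⟫ = (1 + lam * μ)⁻¹ * (⟪b, z⟫ + lam * ‖b‖ ^ 2) := by
    rw [real_inner_comm, hmx, hb, real_inner_comm, real_inner_self_eq_norm_sq]; simp
  have hmz : ⟪m, z⟫ = (1 + lam * μ)⁻¹ * (‖z‖ ^ 2 + lam * ⟪b, z⟫)
      + ((1 + lam * L)⁻¹ - (1 + lam * μ)⁻¹) * ‖T z‖ ^ 2 := by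
    rw [hmx, real_inner_self_eq_norm_sq, real_inner_self_eq_norm_sq]
  have hmm : ‖m‖ ^ 2 = (1 + lam * μ)⁻¹ * (⟪m, z⟫ + lam * ⟪b, m⟫)
      + ((1 + lam * L)⁻¹ - (1 + lam * μ)⁻¹) * ((1 + lam * L)⁻¹ * ‖T z‖ ^ 2) := by
    rw [← real_inner_self_eq_norm_sq, hmx, hTm, real_inner_smul_right,
      real_inner_self_eq_norm_sq, real_inner_comm z m]
  have hTmu : ‖T (m + u)‖ ^ 2 = (1 + lam * L)⁻¹ ^ 2 * ‖T z‖ ^ 2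
      + 2 * ((1 + lam * L)⁻¹ * ⟪T z, T u⟫) + ‖T u‖ ^ 2 := by
    rw [map_add, norm_add_sq_real, hTm, real_inner_smul_left, norm_smul, mul_pow,
      Real.norm_eq_abs, sq_abs]
  rw [norm_sub_sq_real, norm_add_sq_real, hTmu, inner_add_right, inner_add_left, hmm, hmz, hbm,
    hmx u, real_inner_comm z u, e1, e2]
  field_simp
  ring

/-- Explicit formula for the Moreau envelope of
`h(z) = (μ/2)‖z‖² + ((L−μ)/2)‖Fz‖² − ⟨b,z⟩` when `F Fᵀ = I` and `Fᵀ F b = 0`. -/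
theorem moreau_envelope_formula (d p : ℕ) (L μ lam : ℝ)
    (hμ : 0 < μ) (hL : μ < L) (hlam : 0 < lam)
    (F : Matrix (Fin p) (Fin d) ℝ) (hF : F * Fᵀ = 1)
    (b : EuclideanSpace ℝ (Fin d)) (hb : Matrix.toEuclideanLin (Fᵀ * F) b = 0)
    (h : EuclideanSpace ℝ (Fin d) → ℝ)
    (hh : ∀ z, h z = μ / 2 * ‖z‖ ^ 2 + (L - μ) / 2 * ‖Matrix.toEuclideanLin F z‖ ^ 2 - ⟪b, z⟫) :
    ∀ z : EuclideanSpace ℝ (Fin d),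
      (⨅ z' : EuclideanSpace ℝ (Fin d), (h z' + 1 / (2 * lam) * ‖z' - z‖ ^ 2)) =
        (lam + 1 / μ)⁻¹ / 2 * ‖z‖ ^ 2 +
          ((lam + 1 / L)⁻¹ - (lam + 1 / μ)⁻¹) / 2 * ‖Matrix.toEuclideanLin F z‖ ^ 2 -
          (1 + lam * μ)⁻¹ * ⟪b, z⟫ - lam * ‖b‖ ^ 2 / (2 * (1 + lam * μ)) := by
  intro z
  set T := Matrix.toEuclideanLin F with hT
  set P := Matrix.toEuclideanLin (Fᵀ * F) with hPd
  have hadj : ∀ (x : EuclideanSpace ℝ (Fin p)) (y : EuclideanSpace ℝ (Fin d)),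
      ⟪Matrix.toEuclideanLin Fᵀ x, y⟫ = ⟪x, T y⟫ := by
    intro x y
    rw [← Matrix.conjTranspose_eq_transpose_of_trivial,
      Matrix.toEuclideanLin_conjTranspose_eq_adjoint, LinearMap.adjoint_inner_left]
  have hPc : ∀ x, P x = Matrix.toEuclideanLin Fᵀ (T x) := by
    intro x
    simp [hPd, hT, Matrix.toLpLin_apply, Matrix.mulVec_mulVec]
  have hP : ∀ x y, ⟪P x, y⟫ = ⟪T x, T y⟫ := fun x y => by rw [hPc, hadj]
  have hTP : ∀ x, T (P x) = T x := by
    intro x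
    simp [hPd, hT, Matrix.toLpLin_apply, Matrix.mulVec_mulVec, ← Matrix.mul_assoc, hF]
  have hTb : T b = 0 := by rw [← hTP, hb, map_zero]
  have key := fun u => moreau_aux T P L μ lam hμ hL hlam hP hTP b hTb z _ u rfl
  set m := (1 + lam * μ)⁻¹ • (z + lam • b) + ((1 + lam * L)⁻¹ - (1 + lam * μ)⁻¹) • P z
  apply IsLeast.csInf_eq
  refine ⟨⟨m, ?_⟩, ?_⟩
  · have := key 0
    simp only [add_zero, map_zero, norm_zero] at this
    simp only [hh]
    rw [this]; ring
  · rintro _ ⟨w, rfl⟩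
    have := key (w - m)
    simp only [add_sub_cancel] at this
    simp only [hh]
    rw [this]
    have h1 : 0 ≤ (L - μ) / 2 * ‖T (w - m)‖ ^ 2 :=
      mul_nonneg (by linarith) (by positivity)
    have h2 : 0 ≤ (μ + 1 / lam) / 2 * ‖w - m‖ ^ 2 := by positivity
    linarith
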